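/- The characteristic polynomial of A equals X^(2^K − K) · (X − 2^K)^(K/2) · (X + 2^K)^(K/2); equivalently, A has exactly the eigenvalues +2^K with multiplicity K/2, −2^K with multiplicity K/2, and 0 with multiplicity 2^K − K. -/

import Mathlib

/-- The value ±1 associated to a Boolean sign. -/
noncomputable def sgn (b : Bool) : ℝ := if b then 1 else -1

/-- The `2^K × 2^K` matrix with rows and columns indexed by sign vectors
`u, v ∈ {−1,1}^K` (encoded as `Fin K → Bool`), with entries
`A_{u,v} = Σ_{m=1}^K (−1)^m u_m v_m`. -/
noncomputable def volcanoA (K : ℕ) : Matrix (Fin K → Bool) (Fin K → Bool) ℝ :=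
  Matrix.of fun u v => ∑ m : Fin K, (-1 : ℝ) ^ ((m : ℕ) + 1) * sgn (u m) * sgn (v m)


lemma sgn_mul_self' (b : Bool) : sgn b * sgn b = 1 := by
  cases b <;> simp [sgn]

lemma sgn_not' (b : Bool) : sgn (!b) = - sgn b := by
  cases b <;> simp [sgn]

lemma sgn_orth (K : ℕ) (m n : Fin K) :
    ∑ v : Fin K → Bool, sgn (v m) * sgn (v n) = if m = n then (2 : ℝ) ^ K else 0 := by
  split_ifs with h
  · subst h
    simp [sgn_mul_self']
  · have hinv : Function.Involutive
        (fun v : Fin K → Bool => Function.update v m (!(v m))) := by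
      intro v
      simp
    have h1 := Equiv.sum_comp (Function.Involutive.toPerm _ hinv) (fun v : Fin K → Bool => sgn (v m) * sgn (v n))
    have h2 : ∀ v : Fin K → Bool,
        sgn (Function.Involutive.toPerm _ hinv v m) * sgn (Function.Involutive.toPerm _ hinv v n) = -(sgn (v m) * sgn (v n)) := by
      intro v
      simp [Function.Involutive.toPerm, Function.update_of_ne (Ne.symm h), sgn_not']
    simp only [h2, Finset.sum_neg_distrib] at h1
    linarith

open Polynomial in
lemma prod_aux (c : ℝ) (k : ℕ) :
    ∏ i ∈ Finset.range (k + k), (X - C ((-1 : ℝ) ^ (i + 1) * c)) =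
      (X - C c) ^ k * (X + C c) ^ k := by
  induction k with
  | zero => simp
  | succ k ih =>
    have e : k + 1 + (k + 1) = k + k + 1 + 1 := by ring
    have h1 : (-1 : ℝ) ^ (k + k + 1) = -1 := Odd.neg_one_pow ⟨k, by ring⟩
    have h2 : (-1 : ℝ) ^ (k + k + 1 + 1) = 1 := Even.neg_one_pow ⟨k + 1, by ring⟩
    rw [e, Finset.prod_range_succ, Finset.prod_range_succ, ih, h1, h2]
    simp only [neg_mul, one_mul, map_neg]
    ring

open Polynomial in
/-- The characteristic polynomial of `A` is
`X^(2^K − K) · (X − 2^K)^(K/2) · (X + 2^K)^(K/2)`: the eigenvalues are `+2^K`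
with multiplicity `K/2`, `−2^K` with multiplicity `K/2`, and `0` with
multiplicity `2^K − K`. -/
theorem stmt4 (K : ℕ) (hK : 0 < K) (hKeven : Even K) :
    (volcanoA K).charpoly =
      X ^ (2 ^ K - K) * (X - C ((2 : ℝ) ^ K)) ^ (K / 2) * (X + C ((2 : ℝ) ^ K)) ^ (K / 2) := by
  let P : Matrix (Fin K → Bool) (Fin K) ℝ := Matrix.of fun u m => sgn (u m)
  let Q : Matrix (Fin K) (Fin K → Bool) ℝ :=
    Matrix.of fun m v => (-1 : ℝ) ^ ((m : ℕ) + 1) * sgn (v m)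
  have hA : volcanoA K = P * Q := by
    ext u v
    simp only [volcanoA, P, Q, Matrix.mul_apply, Matrix.of_apply]
    exact Finset.sum_congr rfl fun m _ => by ring
  have hD : Q * P = Matrix.diagonal fun m : Fin K => (-1 : ℝ) ^ ((m : ℕ) + 1) * 2 ^ K := by
    ext m n
    simp only [P, Q, Matrix.mul_apply, Matrix.of_apply, Matrix.diagonal_apply, mul_assoc]
    rw [← Finset.mul_sum, sgn_orth]
    split_ifs <;> simp
  have hle : Fintype.card (Fin K) ≤ Fintype.card (Fin K → Bool) := by
    simpa using (Nat.lt_two_pow_self (n := K)).le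
  rw [hA, Matrix.charpoly_mul_comm_of_le P Q hle, hD, Matrix.charpoly_diagonal,
    Fin.prod_univ_eq_prod_range (fun i => X - C ((-1 : ℝ) ^ (i + 1) * 2 ^ K)) K]
  obtain ⟨k, rfl⟩ := hKeven
  have hk : (k + k) / 2 = k := by omega
  rw [prod_aux, hk, mul_assoc]
  simp
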